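/- There exists ε₀ > 0 such that for every ε with 0 < ε < ε₀ the following holds in the ε-instance: if X' = (X'_1, X'_2, X'_3) is a complete EFX allocation whose product v_1(X'_1)·v_2(X'_2)·v_3(X'_3) is maximum among all complete EFX allocations, then the goods g_3, g_5 and g_6 are allocated to three distinct agents, X'_2 contains exactly one good of {g_3, g_5}, and X'_3 contains exactly one good of {g_5, g_6}. -/

import Mathlib

open Finset

/-- Additive value of a bundle `S` under per-good valuation `v`. -/
noncomputable def val {G : Type*} (v : G → ℝ) (S : Finset G) : ℝ := ∑ g ∈ S, v g

/-- `X` is EFX: no agent `i` strongly envies agent `j`, i.e. for every good `g`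
in `X j`, `v_i(X_i) ≥ v_i(X_j \ {g})`. -/
def EFX {G : Type*} [DecidableEq G] (v : Fin 3 → G → ℝ) (X : Fin 3 → Finset G) : Prop :=
  ∀ i j : Fin 3, ∀ g ∈ X j, val (v i) (X j \ {g}) ≤ val (v i) (X i)

/-- The valuations of the ε-instance: agent `i`'s value for good `g_{k+1}` is `vE ε i k`. -/
noncomputable def vE (ε : ℝ) : Fin 3 → Fin 7 → ℝ :=
  ![![ε ^ 3 + 6 * ε ^ 5, 2 * ε ^ 5, 10 - ε ^ 3, ε ^ 3, 10 - 2 * ε ^ 3,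
      10 + 3 * ε ^ 5, ε ^ 5],
    ![ε, 0, 10 - ε ^ 2 + ε ^ 6, 2 * ε ^ 2, 10, 0, ε - ε ^ 2],
    ![0, 0, 0, 0, 10 - ε ^ 4, 10, 2 * ε ^ 4]]

/-- The partial allocation `X₁ = {g₂,g₃,g₄}`, `X₂ = {g₁,g₅}`, `X₃ = {g₆}` (goods are
`0`-indexed: good `g_{k+1}` is `k : Fin 7`). -/
def XT : Fin 3 → Finset (Fin 7) :=
  ![{1, 2, 3}, {0, 4}, {5}]

/-- Enlarging a bundle of nonnegatively valued goods does not decrease its value. -/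
theorem val_mono {G : Type*} {v : G → ℝ} (hv : ∀ g, 0 ≤ v g) {S T : Finset G} (hST : S ⊆ T) :
    val v S ≤ val v T :=
  Finset.sum_le_sum_of_subset_of_nonneg hST fun g _ _ => hv g

theorem val_nonneg {G : Type*} {v : G → ℝ} (hv : ∀ g, 0 ≤ v g) (S : Finset G) : 0 ≤ val v S :=
  Finset.sum_nonneg fun g _ => hv g

/-- For small `ε`, each power of `ε` is at most a tenth of the previous one. -/
theorem small_pow_bounds {ε : ℝ} (h0 : 0 < ε) (h1 : ε < 1 / 10) :
    (0 < ε ^ 2 ∧ 0 < ε ^ 3 ∧ 0 < ε ^ 4 ∧ 0 < ε ^ 5 ∧ 0 < ε ^ 6) ∧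
    ε ^ 2 ≤ ε / 10 ∧ ε ^ 3 ≤ ε ^ 2 / 10 ∧ ε ^ 4 ≤ ε ^ 3 / 10 ∧ ε ^ 5 ≤ ε ^ 4 / 10 ∧
      ε ^ 6 ≤ ε ^ 5 / 10 := by
  have step : ∀ n : ℕ, ε ^ (n + 1) ≤ ε ^ n / 10 := fun n => by
    rw [pow_succ]
    have := pow_pos h0 n
    nlinarith
  refine ⟨⟨by positivity, by positivity, by positivity, by positivity, by positivity⟩,
    ?_, step 2, step 3, step 4, step 5⟩
  simpa using step 1

theorem vE_nonneg {ε : ℝ} (h0 : 0 < ε) (h1 : ε < 1 / 10) (i : Fin 3) (g : Fin 7) :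
    0 ≤ vE ε i g := by
  obtain ⟨⟨_, _, _, _, _⟩, _, _, _, _, _⟩ := small_pow_bounds h0 h1
  fin_cases i <;> fin_cases g <;> simp [vE] <;> linarith

/-- A complete EFX allocation of the `ε`-instance of near-maximal Nash welfare. -/
def completeEFXAlloc : Fin 3 → Finset (Fin 7) :=
  ![{2, 3, 6}, {0, 1, 4}, {5}]

theorem completeEFXAlloc_EFX {ε : ℝ} (h0 : 0 < ε) (h1 : ε < 1 / 10) :
    EFX (vE ε) completeEFXAlloc := by
  obtain ⟨⟨_, _, _, _, _⟩, _, _, _, _, _⟩ := small_pow_bounds h0 h1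
  have sdiffs : (({2, 3, 6} : Finset (Fin 7)) \ {2} = {3, 6} ∧
      ({2, 3, 6} : Finset (Fin 7)) \ {3} = {2, 6} ∧ ({2, 3, 6} : Finset (Fin 7)) \ {6} = {2, 3}) ∧
      ({0, 1, 4} : Finset (Fin 7)) \ {0} = {1, 4} ∧ ({0, 1, 4} : Finset (Fin 7)) \ {1} = {0, 4} ∧
      ({0, 1, 4} : Finset (Fin 7)) \ {4} = {0, 1} := by decide
  obtain ⟨⟨e1, e2, e3⟩, e4, e5, e6⟩ := sdiffs
  intro i j g hg
  fin_cases j <;> simp [completeEFXAlloc] at hg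
  · rcases hg with rfl | rfl | rfl <;> fin_cases i <;>
      simp [completeEFXAlloc, e1, e2, e3, _root_.val, vE] <;> linarith
  · rcases hg with rfl | rfl | rfl <;> fin_cases i <;>
      simp [completeEFXAlloc, e4, e5, e6, _root_.val, vE] <;> linarith
  · subst hg
    fin_cases i <;> simp [completeEFXAlloc, _root_.val, vE] <;> linarith

theorem completeEFXAlloc_nash {ε : ℝ} (h0 : 0 < ε) :
    1000 ≤ val (vE ε 0) (completeEFXAlloc 0) * val (vE ε 1) (completeEFXAlloc 1) *
      val (vE ε 2) (completeEFXAlloc 2) := by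
  have h5 : 0 < ε ^ 5 := by positivity
  have e0 : val (vE ε 0) (completeEFXAlloc 0) = 10 + ε ^ 5 := by
    simp [completeEFXAlloc, _root_.val, vE]; ring
  have e1 : val (vE ε 1) (completeEFXAlloc 1) = 10 + ε := by
    simp [completeEFXAlloc, _root_.val, vE]; ring
  have e2 : val (vE ε 2) (completeEFXAlloc 2) = 10 := by
    simp [completeEFXAlloc, _root_.val, vE]
  rw [e0, e1, e2]
  nlinarith [mul_pos h5 h0]

/-- Each agent's value for the goods outside her large ones is below `1 / 4`. -/
theorem val_compl_large_le {ε : ℝ} (h0 : 0 < ε) (h1 : ε < 1 / 10) :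
    val (vE ε 0) {0, 1, 3, 6} ≤ 1 / 4 ∧ val (vE ε 1) {0, 1, 3, 5, 6} ≤ 1 / 4 ∧
      val (vE ε 2) {0, 1, 2, 3, 6} ≤ 1 / 4 := by
  obtain ⟨⟨_, _, _, _, _⟩, _, _, _, _, _⟩ := small_pow_bounds h0 h1
  refine ⟨?_, ?_, ?_⟩ <;> simp [_root_.val, vE] <;> linarith

theorem val_univ_le {ε : ℝ} (h0 : 0 < ε) (h1 : ε < 1 / 10) :
    val (vE ε 0) univ ≤ 31 ∧ val (vE ε 1) univ ≤ 21 ∧ val (vE ε 2) univ ≤ 21 := by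
  obtain ⟨⟨_, _, _, _, _⟩, _, _, _, _, _⟩ := small_pow_bounds h0 h1
  refine ⟨?_, ?_, ?_⟩ <;> simp [_root_.val, vE, Fin.sum_univ_succ] <;> linarith

/-- A product of three nonnegative reals bounded by `31`, `21`, `21` and at least `1000` has no
factor below `1 / 4`. -/
theorem quarter_lt_of_thousand_le_mul {a b c : ℝ} (ha : 0 ≤ a) (hb : 0 ≤ b) (hc : 0 ≤ c)
    (ha' : a ≤ 31) (hb' : b ≤ 21) (hc' : c ≤ 21) (h : 1000 ≤ a * b * c) :
    1 / 4 < a ∧ 1 / 4 < b ∧ 1 / 4 < c := by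
  have key : ∀ {x y z : ℝ}, x ≤ 1 / 4 → 0 ≤ y → y ≤ 31 → 0 ≤ z → z ≤ 31 → x * (y * z) < 1000 := by
    intro x y z hx hy hy' hz hz'
    have : y * z ≤ 31 * 31 := mul_le_mul hy' hz' hz (by norm_num)
    nlinarith [mul_nonneg hy hz]
  refine ⟨?_, ?_, ?_⟩ <;> by_contra! hlt
  · linarith [key hlt hb (by linarith) hc (by linarith), mul_assoc a b c]
  · linarith [key hlt ha ha' hc (by linarith), mul_comm b (a * c), mul_right_comm a b c]
  · linarith [key hlt ha ha' hb (by linarith), mul_comm c (a * b)]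

/-- For all sufficiently small `ε > 0`: any complete EFX allocation of the ε-instance with
maximum Nash-welfare product allocates `g₃`, `g₅`, `g₆` (indices `2`, `4`, `5`) to three
distinct agents, gives agent 2 (index `1`) exactly one of `{g₃,g₅}`, and gives agent 3
(index `2`) exactly one of `{g₅,g₆}`. -/
theorem eps_instance_max_nash_structure :
    ∃ ε₀ : ℝ, 0 < ε₀ ∧ ∀ ε : ℝ, 0 < ε → ε < ε₀ →
      ∀ X' : Fin 3 → Finset (Fin 7),
        (∀ i j, i ≠ j → Disjoint (X' i) (X' j)) →
        X' 0 ∪ X' 1 ∪ X' 2 = Finset.univ →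
        EFX (vE ε) X' →
        (∀ Y : Fin 3 → Finset (Fin 7),
          (∀ i j, i ≠ j → Disjoint (Y i) (Y j)) →
          Y 0 ∪ Y 1 ∪ Y 2 = Finset.univ →
          EFX (vE ε) Y →
          val (vE ε 0) (Y 0) * val (vE ε 1) (Y 1) * val (vE ε 2) (Y 2)
            ≤ val (vE ε 0) (X' 0) * val (vE ε 1) (X' 1) * val (vE ε 2) (X' 2)) →
        ((∀ i : Fin 3, ¬ ((2 : Fin 7) ∈ X' i ∧ (4 : Fin 7) ∈ X' i)) ∧
         (∀ i : Fin 3, ¬ ((2 : Fin 7) ∈ X' i ∧ (5 : Fin 7) ∈ X' i)) ∧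
         (∀ i : Fin 3, ¬ ((4 : Fin 7) ∈ X' i ∧ (5 : Fin 7) ∈ X' i)) ∧
         (((2 : Fin 7) ∈ X' 1 ∧ (4 : Fin 7) ∉ X' 1) ∨
           ((2 : Fin 7) ∉ X' 1 ∧ (4 : Fin 7) ∈ X' 1)) ∧
         (((4 : Fin 7) ∈ X' 2 ∧ (5 : Fin 7) ∉ X' 2) ∨
           ((4 : Fin 7) ∉ X' 2 ∧ (5 : Fin 7) ∈ X' 2))) := by
  refine ⟨1 / 10, by norm_num, fun ε h0 h1 X hdisj _ _ hmax => ?_⟩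
  have hnash := (completeEFXAlloc_nash h0).trans
    (hmax completeEFXAlloc (by decide) (by decide) (completeEFXAlloc_EFX h0 h1))
  have hnn := vE_nonneg h0 h1
  obtain ⟨u0, u1, u2⟩ := val_univ_le h0 h1
  have hle : ∀ i, val (vE ε i) (X i) ≤ val (vE ε i) univ := fun i =>
    val_mono (hnn i) (Finset.subset_univ _)
  obtain ⟨q0, q1, q2⟩ := quarter_lt_of_thousand_le_mul (val_nonneg (hnn 0) _)
    (val_nonneg (hnn 1) _) (val_nonneg (hnn 2) _) ((hle 0).trans u0) ((hle 1).trans u1)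
    ((hle 2).trans u2) hnash
  obtain ⟨s0, s1, s2⟩ := val_compl_large_le h0 h1
  have l0 : 2 ∈ X 0 ∨ 4 ∈ X 0 ∨ 5 ∈ X 0 := by
    by_contra! hno
    refine absurd ((val_mono (hnn 0) fun g hg => ?_).trans s0) (not_le.mpr q0)
    fin_cases g <;> simp_all
  have l1 : 2 ∈ X 1 ∨ 4 ∈ X 1 := by
    by_contra! hno
    refine absurd ((val_mono (hnn 1) fun g hg => ?_).trans s1) (not_le.mpr q1)
    fin_cases g <;> simp_all
  have l2 : 4 ∈ X 2 ∨ 5 ∈ X 2 := by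
    by_contra! hno
    refine absurd ((val_mono (hnn 2) fun g hg => ?_).trans s2) (not_le.mpr q2)
    fin_cases g <;> simp_all
  have d : ∀ g, ¬ (g ∈ X 0 ∧ g ∈ X 1) ∧ ¬ (g ∈ X 0 ∧ g ∈ X 2) ∧ ¬ (g ∈ X 1 ∧ g ∈ X 2) := fun g =>
    ⟨fun h => Finset.disjoint_left.mp (hdisj 0 1 (by decide)) h.1 h.2,
      fun h => Finset.disjoint_left.mp (hdisj 0 2 (by decide)) h.1 h.2,
      fun h => Finset.disjoint_left.mp (hdisj 1 2 (by decide)) h.1 h.2⟩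
  have d2 := d 2
  have d4 := d 4
  have d5 := d 5
  have all3 : ∀ p : Fin 3 → Prop, p 0 → p 1 → p 2 → ∀ i, p i := fun p p0 p1 p2 i => by
    fin_cases i <;> assumption
  refine ⟨all3 _ ?_ ?_ ?_, all3 _ ?_ ?_ ?_, all3 _ ?_ ?_ ?_, ?_, ?_⟩ <;>
    clear hmax hdisj hnash hnn hle d all3 <;> grind
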